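/- arXiv:2605.06062 — 2 statements merged into one kernel-verified Lean document; each statement's English description precedes it below -/
import Mathlib

section
/- Consider the full persistent-surveillance system and the per-part subsystems. Fix an index i : Fin N and let A ⊆ D be any invariant set for the full system (for every s ∈ A, Ffull s ⊆ A). Define the projection Π_i(A) := {(x, zi, u) | ∃ z : Fin N → ℝ, z i = zi ∧ (x, z, u) ∈ A}. Then Π_i(A) ⊆ D_i and Π_i(A) is invariant for the i-th per-part subsystem, i.e. for every (x, zi, u) ∈ Π_i(A), Fi (x, zi, u) ⊆ Π_i(A). -/
/-- A set `A` is (robust positively) invariant for the set-valued successor map `F`. -/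
def Invariant {α : Type*} (F : α → Set α) (A : Set α) : Prop :=
  ∀ s ∈ A, F s ⊆ A

/-- The maximal invariant subset of `D`: the union of all invariant subsets of `D`. -/
def maxInv {α : Type*} (F : α → Set α) (D : Set α) : Set α :=
  ⋃₀ {A : Set α | A ⊆ D ∧ Invariant F A}

/-- Region-dependent LPV factor set: decay interval when `x` is in the observation
region of part `i`, growth interval otherwise. -/
noncomputable def Gamma {N : ℕ} (Obs : Fin N → Set (ℝ × ℝ))
    (aMin aMax bMin bMax : Fin N → ℝ) (i : Fin N) (x : ℝ × ℝ) : Set ℝ :=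
  open Classical in
  if x ∈ Obs i then Set.Icc (aMin i) (aMax i) else Set.Icc (bMin i) (bMax i)

/-- Successor map of the full persistent-surveillance system on state–input vectors
`(x, z, u) ∈ ℝ² × (Fin N → ℝ) × ℝ²`. -/
def Ffull {N : ℕ} (Ts : ℝ) (U : Set (ℝ × ℝ)) (Obs : Fin N → Set (ℝ × ℝ))
    (aMin aMax bMin bMax : Fin N → ℝ)
    (s : (ℝ × ℝ) × (Fin N → ℝ) × (ℝ × ℝ)) :
    Set ((ℝ × ℝ) × (Fin N → ℝ) × (ℝ × ℝ)) :=
  {p | ∃ z' : Fin N → ℝ, ∃ u' ∈ U, ∃ γ : Fin N → ℝ,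
    (∀ i, γ i ∈ Gamma Obs aMin aMax bMin bMax i s.1) ∧
    (∀ i, z' i = γ i * s.2.1 i) ∧
    p = (s.1 + Ts • s.2.2, z', u')}

/-- Successor map of the `i`-th per-part subsystem on `(x, zᵢ, u) ∈ ℝ² × ℝ × ℝ²`. -/
def Fsub {N : ℕ} (Ts : ℝ) (U : Set (ℝ × ℝ)) (Obs : Fin N → Set (ℝ × ℝ))
    (aMin aMax bMin bMax : Fin N → ℝ) (i : Fin N)
    (s : (ℝ × ℝ) × ℝ × (ℝ × ℝ)) : Set ((ℝ × ℝ) × ℝ × (ℝ × ℝ)) :=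
  {p | ∃ u' ∈ U, ∃ γ ∈ Gamma Obs aMin aMax bMin bMax i s.1,
    p = (s.1 + Ts • s.2.2, γ * s.2.1, u')}

/-- Constraint set of the full system. -/
def Dfull {N : ℕ} (X U : Set (ℝ × ℝ)) (zcrit : Fin N → ℝ) :
    Set ((ℝ × ℝ) × (Fin N → ℝ) × (ℝ × ℝ)) :=
  {s | s.1 ∈ X ∧ (∀ i, s.2.1 i ∈ Set.Icc (0 : ℝ) (zcrit i)) ∧ s.2.2 ∈ U}

/-- Constraint set of a per-part subsystem with critical threshold `zc`. -/
def Dsub (X U : Set (ℝ × ℝ)) (zc : ℝ) : Set ((ℝ × ℝ) × ℝ × (ℝ × ℝ)) :=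
  {s | s.1 ∈ X ∧ s.2.1 ∈ Set.Icc (0 : ℝ) zc ∧ s.2.2 ∈ U}

theorem Invariant.image {α β : Type*} {F : α → Set α} {G : β → Set β} {A : Set α} {π : α → β}
    (hA : Invariant F A) (hlift : ∀ s ∈ A, G (π s) ⊆ π '' F s) : Invariant G (π '' A) := by
  rintro _ ⟨s, hs, rfl⟩
  exact (hlift s hs).trans (Set.image_mono (hA s hs))

/-- The projection `(x, z, u) ↦ (x, z i, u)` of the full state space onto that of part `i`;
the paper's `Π_i(A)` is the image `partProj i '' A`. -/
def partProj {ι E Z V : Type*} (i : ι) (s : E × (ι → Z) × V) : E × Z × V :=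
  (s.1, s.2.1 i, s.2.2)

theorem image_partProj {ι E Z V : Type*} (i : ι) (A : Set (E × (ι → Z) × V)) :
    partProj i '' A = {p | ∃ z : ι → Z, z i = p.2.1 ∧ (p.1, z, p.2.2) ∈ A} := by
  ext ⟨x, zi, u⟩
  constructor
  · rintro ⟨⟨x, z, u⟩, hs, ⟨⟩⟩
    exact ⟨z, rfl, hs⟩
  · rintro ⟨z, rfl, hs⟩
    exact ⟨(x, z, u), hs, rfl⟩

section Surveillance

variable {N : ℕ} {X U : Set (ℝ × ℝ)} {Obs : Fin N → Set (ℝ × ℝ)}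
  {zcrit aMin aMax bMin bMax : Fin N → ℝ}

theorem mapsTo_partProj_Dfull_Dsub (i : Fin N) :
    Set.MapsTo (partProj i) (Dfull X U zcrit) (Dsub X U (zcrit i)) :=
  fun _ ⟨hx, hz, hu⟩ => ⟨hx, hz i, hu⟩

theorem Gamma_nonempty {i : Fin N} (ha : aMin i ≤ aMax i) (hb : bMin i ≤ bMax i) (x : ℝ × ℝ) :
    (Gamma Obs aMin aMax bMin bMax i x).Nonempty := by
  unfold Gamma
  split_ifs
  · exact Set.nonempty_Icc.mpr ha
  · exact Set.nonempty_Icc.mpr hb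

/- Part `i` keeps its given factor while the other parts take arbitrary admissible ones, so every
subsystem step lifts to a full step. -/
theorem Fsub_partProj_subset_image_Ffull {Ts : ℝ} {i : Fin N}
    {s : (ℝ × ℝ) × (Fin N → ℝ) × (ℝ × ℝ)}
    (hΓ : ∀ j, (Gamma Obs aMin aMax bMin bMax j s.1).Nonempty) :
    Fsub Ts U Obs aMin aMax bMin bMax i (partProj i s) ⊆
      partProj i '' Ffull Ts U Obs aMin aMax bMin bMax s := by
  rintro _ ⟨u', hu', γi, hγi, rfl⟩
  obtain ⟨γ, hγ, rfl⟩ := Set.subset_eval_image_pi (Set.univ_pi_nonempty_iff.mpr hΓ) i hγi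
  exact ⟨(s.1 + Ts • s.2.2, γ * s.2.1, u'),
    ⟨γ * s.2.1, u', hu', γ, fun j => hγ j (Set.mem_univ j), fun _ => rfl, rfl⟩, rfl⟩

end Surveillance

/-- If `A ⊆ D` is invariant for the full system, then its projection
`Π_i(A) = {(x, zᵢ, u) | ∃ z, z i = zᵢ ∧ (x, z, u) ∈ A}` onto the `i`-th per-part state
space is contained in `D_i` and is invariant for the `i`-th per-part subsystem. -/
theorem projection_of_full_invariant_is_invariant (N : ℕ) (Ts : ℝ) (hTs : 0 < Ts)
    (X U : Set (ℝ × ℝ)) (Obs : Fin N → Set (ℝ × ℝ))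
    (zcrit aMin aMax bMin bMax : Fin N → ℝ)
    (hzcrit : ∀ i, 0 < zcrit i)
    (haMin : ∀ i, 0 < aMin i) (haMinMax : ∀ i, aMin i ≤ aMax i)
    (hbMin : ∀ i, 0 < bMin i) (hbMinMax : ∀ i, bMin i ≤ bMax i)
    (i : Fin N) (A : Set ((ℝ × ℝ) × (Fin N → ℝ) × (ℝ × ℝ)))
    (hAD : A ⊆ Dfull X U zcrit)
    (hInv : Invariant (Ffull Ts U Obs aMin aMax bMin bMax) A) :
    {p : (ℝ × ℝ) × ℝ × (ℝ × ℝ) | ∃ z : Fin N → ℝ, z i = p.2.1 ∧ (p.1, z, p.2.2) ∈ A}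
      ⊆ Dsub X U (zcrit i) ∧
    Invariant (Fsub Ts U Obs aMin aMax bMin bMax i)
      {p : (ℝ × ℝ) × ℝ × (ℝ × ℝ) | ∃ z : Fin N → ℝ, z i = p.2.1 ∧ (p.1, z, p.2.2) ∈ A} := by
  rw [← image_partProj i A]
  exact ⟨((mapsTo_partProj_Dfull_Dsub i).mono_left hAD).image_subset,
    hInv.image fun s _ => Fsub_partProj_subset_image_Ffull
      fun j => Gamma_nonempty (haMinMax j) (hbMinMax j) s.1⟩
end

section
/- Consider the i-th per-part subsystem with interval (LPV) uncertainty. If A ⊆ D_i is invariant for Fi (for every s ∈ A, Fi s ⊆ A), then its downward closure in the uncertainty coordinate, A↓ := {(x, zi', u) | ∃ zi, (x, zi, u) ∈ A ∧ 0 ≤ zi' ∧ zi' ≤ zi}, satisfies A↓ ⊆ D_i and A↓ is invariant for Fi. Consequently the maximal invariant subset S_i of D_i for Fi is downward closed in the uncertainty coordinate: if (x, zi, u) ∈ S_i and 0 ≤ zi' ≤ zi then (x, zi', u) ∈ S_i. -/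
/-- Region-dependent LPV factor set for one part: decay interval when `x` is in the
observation region, growth interval otherwise. -/
noncomputable def GammaPart (Obsi : Set (ℝ × ℝ)) (aMin aMax bMin bMax : ℝ)
    (x : ℝ × ℝ) : Set ℝ :=
  open Classical in
  if x ∈ Obsi then Set.Icc aMin aMax else Set.Icc bMin bMax

/-- Interval (LPV) successor map of the per-part subsystem on `(x, zᵢ, u) ∈ ℝ² × ℝ × ℝ²`. -/
def Fpart (Ts : ℝ) (U : Set (ℝ × ℝ)) (Obsi : Set (ℝ × ℝ)) (aMin aMax bMin bMax : ℝ)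
    (s : (ℝ × ℝ) × ℝ × (ℝ × ℝ)) : Set ((ℝ × ℝ) × ℝ × (ℝ × ℝ)) :=
  {p | ∃ u' ∈ U, ∃ γ ∈ GammaPart Obsi aMin aMax bMin bMax s.1,
    p = (s.1 + Ts • s.2.2, γ * s.2.1, u')}

/-- Worst-case vertex factor: `aMax` when observed, `bMax` otherwise. -/
noncomputable def cVert (Obsi : Set (ℝ × ℝ)) (aMax bMax : ℝ) (x : ℝ × ℝ) : ℝ :=
  open Classical in
  if x ∈ Obsi then aMax else bMax

/-- Worst-case vertex successor map of the per-part subsystem. -/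
noncomputable def Fvert (Ts : ℝ) (U : Set (ℝ × ℝ)) (Obsi : Set (ℝ × ℝ)) (aMax bMax : ℝ)
    (s : (ℝ × ℝ) × ℝ × (ℝ × ℝ)) : Set ((ℝ × ℝ) × ℝ × (ℝ × ℝ)) :=
  {p | ∃ u' ∈ U, p = (s.1 + Ts • s.2.2, cVert Obsi aMax bMax s.1 * s.2.1, u')}

/-- Per-part constraint set with critical threshold `zc`. -/
def Dpart (X U : Set (ℝ × ℝ)) (zc : ℝ) : Set ((ℝ × ℝ) × ℝ × (ℝ × ℝ)) :=
  {s | s.1 ∈ X ∧ s.2.1 ∈ Set.Icc (0 : ℝ) zc ∧ s.2.2 ∈ U}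

/-- Downward closure in the uncertainty coordinate. -/
def DownCl (A : Set ((ℝ × ℝ) × ℝ × (ℝ × ℝ))) : Set ((ℝ × ℝ) × ℝ × (ℝ × ℝ)) :=
  {p | ∃ zi : ℝ, (p.1, zi, p.2.2) ∈ A ∧ 0 ≤ p.2.1 ∧ p.2.1 ≤ zi}

section Simulation

variable {α : Type*} {F : α → Set α} {A D : Set α} {R : SetRel α α}

lemma subset_maxInv (hAD : A ⊆ D) (hA : Invariant F A) : A ⊆ maxInv F D :=
  Set.subset_sUnion_of_mem ⟨hAD, hA⟩

lemma maxInv_subset : maxInv F D ⊆ D :=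
  Set.sUnion_subset fun _ hA => hA.1

lemma invariant_maxInv : Invariant F (maxInv F D) := by
  rintro s ⟨A, ⟨hAD, hA⟩, hs⟩
  exact (hA s hs).trans (subset_maxInv hAD hA)

/-- `R` is a simulation for the set-valued successor map `F`: whenever `a` is related to `b`, every
successor of `a` is related to some successor of `b`. It is the comparison under which invariance
is inherited, with the simulated state on the left. -/
def IsSimulation (F : α → Set α) (R : SetRel α α) : Prop :=
  ∀ ⦃a b : α⦄, (a, b) ∈ R → F a ⊆ R.preimage (F b)

lemma IsSimulation.invariant_preimage (hR : IsSimulation F R) (hA : Invariant F A) :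
    Invariant F (R.preimage A) := by
  rintro a ⟨b, hb, hab⟩
  exact (hR hab).trans (SetRel.preimage_mono (hA b hb))

lemma IsSimulation.preimage_maxInv_subset (hR : IsSimulation F R) (hD : R.preimage D ⊆ D) :
    R.preimage (maxInv F D) ⊆ maxInv F D :=
  subset_maxInv ((SetRel.preimage_mono maxInv_subset).trans hD)
    (hR.invariant_preimage invariant_maxInv)

end Simulation

section PerPart

variable {X U Obsi : Set (ℝ × ℝ)} {Ts zc aMin aMax bMin bMax : ℝ}

/-- The domination relation on per-part states: equal position and input, and uncertainties
`0 ≤ z' ≤ z`, with the dominated state on the left. The downward closure of a set is its preimage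
under this relation, which is reflexive only on states with nonnegative uncertainty. -/
def uncertaintyDomination : SetRel ((ℝ × ℝ) × ℝ × (ℝ × ℝ)) ((ℝ × ℝ) × ℝ × (ℝ × ℝ)) :=
  {(s', s) | s'.1 = s.1 ∧ s'.2.2 = s.2.2 ∧ 0 ≤ s'.2.1 ∧ s'.2.1 ≤ s.2.1}

lemma downCl_eq_preimage (A : Set ((ℝ × ℝ) × ℝ × (ℝ × ℝ))) :
    DownCl A = uncertaintyDomination.preimage A := by
  ext ⟨x, z', u⟩
  constructor
  · rintro ⟨z, hz, h_nonneg, h_le⟩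
    exact ⟨(x, z, u), hz, rfl, rfl, h_nonneg, h_le⟩
  · rintro ⟨⟨_, z, _⟩, hz, rfl, rfl, h_nonneg, h_le⟩
    exact ⟨z, hz, h_nonneg, h_le⟩

lemma preimage_uncertaintyDomination_dpart_subset :
    uncertaintyDomination.preimage (Dpart X U zc) ⊆ Dpart X U zc := by
  rintro ⟨x, z', u⟩ ⟨⟨_, z, _⟩, ⟨hx, hz, hu⟩, rfl, rfl, h_nonneg, h_le⟩
  exact ⟨hx, ⟨h_nonneg, h_le.trans hz.2⟩, hu⟩

lemma gammaPart_subset_Ici_zero (haMin : 0 ≤ aMin) (hbMin : 0 ≤ bMin) (x : ℝ × ℝ) :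
    GammaPart Obsi aMin aMax bMin bMax x ⊆ Set.Ici 0 := by
  unfold GammaPart
  split_ifs
  · exact Set.Icc_subset_Ici_self.trans (Set.Ici_subset_Ici.2 haMin)
  · exact Set.Icc_subset_Ici_self.trans (Set.Ici_subset_Ici.2 hbMin)

lemma isSimulation_fpart (haMin : 0 ≤ aMin) (hbMin : 0 ≤ bMin) :
    IsSimulation (Fpart Ts U Obsi aMin aMax bMin bMax) uncertaintyDomination := by
  rintro ⟨x, z', u⟩ ⟨_, z, _⟩ ⟨rfl, rfl, h_nonneg, h_le⟩ _ ⟨u', hu', γ, hγ, rfl⟩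
  have hγ_nonneg : 0 ≤ γ := gammaPart_subset_Ici_zero haMin hbMin x hγ
  exact ⟨(x + Ts • u, γ * z, u'), ⟨u', hu', γ, hγ, rfl⟩, rfl, rfl,
    mul_nonneg hγ_nonneg h_nonneg, mul_le_mul_of_nonneg_left h_le hγ_nonneg⟩

end PerPart

/-- The downward closure (in the uncertainty coordinate) of any invariant subset of `D_i`
is again an invariant subset of `D_i`; consequently the maximal invariant subset of `D_i`
is downward closed in the uncertainty coordinate. -/
theorem rpi_downward_closed (Ts : ℝ) (hTs : 0 < Ts)
    (X U Obsi : Set (ℝ × ℝ)) (zcrit aMin aMax bMin bMax : ℝ)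
    (hzcrit : 0 < zcrit)
    (haMin : 0 < aMin) (haMinMax : aMin ≤ aMax)
    (hbMin : 0 < bMin) (hbMinMax : bMin ≤ bMax) :
    (∀ A : Set ((ℝ × ℝ) × ℝ × (ℝ × ℝ)), A ⊆ Dpart X U zcrit →
      Invariant (Fpart Ts U Obsi aMin aMax bMin bMax) A →
      DownCl A ⊆ Dpart X U zcrit ∧
        Invariant (Fpart Ts U Obsi aMin aMax bMin bMax) (DownCl A)) ∧
    (∀ (x : ℝ × ℝ) (zi zi' : ℝ) (u : ℝ × ℝ),
      (x, zi, u) ∈ maxInv (Fpart Ts U Obsi aMin aMax bMin bMax) (Dpart X U zcrit) →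
      0 ≤ zi' → zi' ≤ zi →
      (x, zi', u) ∈ maxInv (Fpart Ts U Obsi aMin aMax bMin bMax) (Dpart X U zcrit)) := by
  have hF : IsSimulation (Fpart Ts U Obsi aMin aMax bMin bMax) uncertaintyDomination :=
    isSimulation_fpart haMin.le hbMin.le
  constructor
  · intro A hAD hA
    rw [downCl_eq_preimage]
    exact ⟨(SetRel.preimage_mono hAD).trans preimage_uncertaintyDomination_dpart_subset,
      hF.invariant_preimage hA⟩
  · intro x zi zi' u hz h_nonneg h_le
    exact hF.preimage_maxInv_subset preimage_uncertaintyDomination_dpart_subset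
      ⟨(x, zi, u), hz, rfl, rfl, h_nonneg, h_le⟩
end
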